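/- Let α > 0 and h > 0, and let W₁ : ℝ → ℝ be defined by W₁(y) = e^{−y²/4} − (y/2)∫_y^∞ e^{−ζ²/4} dζ. Then there exists a unique σ ∈ ℝ such that the boundary value problem (1/2)w(y) − (y/2)w′(y) − w″(y) = h for y > σ, w(σ) = 0, w′(σ) = α, admits a bounded solution w; namely σ is the unique solution of W₁(σ)/(−2W₁′(σ)) = h/α, and the bounded solution is w(y) = 2h(1 − W₁(y)/W₁(σ)). Moreover, the map h ↦ σ(h) is C^∞ and strictly decreasing, σ(α/√π) = 0, σ(h) > 0 for 0 < h < α/√π, and σ(h) < 0 for h > α/√π. -/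

import Mathlib

set_option autoImplicit false

open Set Filter

/-- The (extended) function `W₁(y) = e^{-y²/4} - (y/2) ∫_y^∞ e^{-ζ²/4} dζ`. -/
noncomputable def W1ext (y : ℝ) : ℝ :=
  Real.exp (-y ^ 2 / 4) - y / 2 * ∫ ζ in Ioi y, Real.exp (-ζ ^ 2 / 4)

/-- `w` is a bounded solution of the Hermite-type boundary value problem
`(1/2)w - (y/2)w' - w'' = h` on `(σ,∞)`, `w σ = 0`, `w'(σ) = α` (one-sided). -/
def HermiteBVP (α h σ : ℝ) (w : ℝ → ℝ) : Prop :=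
  (∃ M : ℝ, ∀ y : ℝ, σ ≤ y → |w y| ≤ M) ∧
  (∀ y : ℝ, σ < y →
    DifferentiableAt ℝ w y ∧ DifferentiableAt ℝ (deriv w) y ∧
    1 / 2 * w y - y / 2 * deriv w y - deriv (deriv w) y = h) ∧
  w σ = 0 ∧
  derivWithin w (Ici σ) σ = α

/-! Write `E y = exp (-y²/4)` and `G y = ∫_y^∞ E`, so that `W₁ = E - (y/2) G` and `W₁' = -G/2`.

The homogeneous equation is solved by `y` and `W₁`, and only the latter is bounded at `+∞`. Hence a
bounded solution is `w = 2h + c W₁`, and the two conditions at `σ` say `c W₁(σ) = -2h` and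
`-c G(σ)/2 = α`, that is, `W₁(σ) / G(σ) = h / α`.

The ratio `W₁ / G` decreases strictly from `+∞` to `0`: the sign of its derivative is that of
`E W₁ - G²/2`, which is negative because each of `G`, `W₁`, `G - y W₁` and `G²/2 - E W₁` vanishes at
`+∞` and has a negative derivative, by the positivity of `E` and of the functions before it. -/

open MeasureTheory Asymptotics
open scoped Topology Real

section General

lemma lt_of_hasDerivAt_neg_of_tendsto_atTop {f f' : ℝ → ℝ} {l : ℝ}
    (hf : ∀ x, HasDerivAt f (f' x) x) (hf' : ∀ x, f' x < 0) (hl : Tendsto f atTop (𝓝 l)) (x : ℝ) :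
    l < f x := by
  have hanti : StrictAnti f := strictAnti_of_hasDerivAt_neg hf hf'
  exact (hanti.antitone.le_of_tendsto hl (x + 1)).trans_lt (hanti (lt_add_one x))

lemma hasDerivAt_integral_Ioi {E : Type*} [NormedAddCommGroup E] [NormedSpace ℝ E]
    [CompleteSpace E] {f : ℝ → E} {x : ℝ} (hf : Integrable f) (hx : ContinuousAt f x) :
    HasDerivAt (fun y ↦ ∫ t in Ioi y, f t) (-f x) x := by
  have hsplit (y : ℝ) : ∫ t in Ioi y, f t = (∫ t in Ioi x, f t) - ∫ t in x..y, f t :=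
    eq_sub_of_add_eq'
      (intervalIntegral.integral_interval_add_Ioi hf.integrableOn hf.integrableOn)
  rw [funext hsplit]
  exact (intervalIntegral.integral_hasDerivAt_right hf.intervalIntegrable
    hf.1.stronglyMeasurableAtFilter hx).const_sub (∫ t in Ioi x, f t)

lemma exists_eq_const_mul_of_hasDerivAt {𝕜 : Type*} [RCLike 𝕜] {s : Set 𝕜} (hs : IsOpen s)
    (hs' : IsPreconnected s) {p u v : 𝕜 → 𝕜} (hu : ∀ x ∈ s, HasDerivAt u (p x * u x) x)
    (hv : ∀ x ∈ s, HasDerivAt v (p x * v x) x) (hv₀ : ∀ x ∈ s, v x ≠ 0) :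
    ∃ c, ∀ x ∈ s, u x = c * v x := by
  have hquot (x : 𝕜) (hx : x ∈ s) : HasDerivAt (fun x ↦ u x / v x) 0 x := by
    convert! (hu x hx).div (hv x hx) (hv₀ x hx) using 1
    ring
  obtain ⟨c, hc⟩ := hs.exists_is_const_of_deriv_eq_zero hs'
    (fun x hx ↦ (hquot x hx).differentiableAt.differentiableWithinAt)
    (fun x hx ↦ (hquot x hx).deriv)
  exact ⟨c, fun x hx ↦ (div_eq_iff (hv₀ x hx)).1 (hc x hx)⟩

lemma eq_zero_of_const_mul_isBigO_one {d : ℝ}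
    (hd : (fun y : ℝ ↦ d * y) =O[atTop] (fun _ ↦ (1 : ℝ))) : d = 0 := by
  by_contra hd₀
  have hself : (id : ℝ → ℝ) =o[atTop] (id : ℝ → ℝ) :=
    (isLittleO_const_mul_left_iff hd₀).1 (hd.trans_isLittleO (isLittleO_const_id_atTop 1))
  exact isLittleO_irrefl (eventually_ne_atTop 0).frequently hself

lemma contDiffAt_of_eventually_leftInverse {𝕜 E F : Type*} [RCLike 𝕜]
    [NormedAddCommGroup E] [NormedSpace 𝕜 E] [CompleteSpace E]
    [NormedAddCommGroup F] [NormedSpace 𝕜 F]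
    {f : E → F} {g : F → E} {f' : E ≃L[𝕜] F} {a : E} {n : WithTop ℕ∞} (hn : n ≠ 0)
    (hf : ContDiffAt 𝕜 n f a) (hf' : HasFDerivAt f (f' : E →L[𝕜] F) a)
    (hg : ∀ᶠ x in 𝓝 a, g (f x) = x) : ContDiffAt 𝕜 n g (f a) :=
  (hf.to_localInverse hf' hn).congr_of_eventuallyEq
    ((hf.hasStrictFDerivAt' hf' hn).localInverse_unique hg)

end General

/-- The Gaussian weight `exp (-y² / 4)`, to which every Wronskian of the homogeneous equation is
proportional. -/
noncomputable def gaussianWeight (y : ℝ) : ℝ := Real.exp (-y ^ 2 / 4)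

/-- The tail integral `∫_y^∞ exp (-ζ² / 4) dζ` of the Gaussian weight, equal to `-2 W₁'(y)`. -/
noncomputable def gaussianTail (y : ℝ) : ℝ := ∫ ζ in Ioi y, gaussianWeight ζ

section Gaussian

lemma gaussianWeight_eq (y : ℝ) : gaussianWeight y = Real.exp (-(1 / 4) * y ^ 2) := by
  rw [gaussianWeight]
  ring_nf

lemma gaussianWeight_pos (y : ℝ) : 0 < gaussianWeight y := Real.exp_pos _

lemma contDiff_gaussianWeight {n : WithTop ℕ∞} : ContDiff ℝ n gaussianWeight := by
  unfold gaussianWeight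
  fun_prop

lemma hasDerivAt_gaussianWeight (y : ℝ) :
    HasDerivAt gaussianWeight (-(y / 2) * gaussianWeight y) y := by
  convert! ((hasDerivAt_pow 2 y).neg.div_const 4).exp using 1
  simp only [gaussianWeight, Pi.neg_apply, Nat.cast_ofNat]
  ring

lemma integrable_gaussianWeight : Integrable gaussianWeight := by
  simpa only [← gaussianWeight_eq] using integrable_exp_neg_mul_sq (b := 1 / 4) (by norm_num)

lemma integrable_mul_gaussianWeight : Integrable fun y ↦ y * gaussianWeight y := by
  simpa only [← gaussianWeight_eq] using integrable_mul_exp_neg_mul_sq (b := 1 / 4) (by norm_num)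

lemma tendsto_pow_mul_gaussianWeight (n : ℕ) :
    Tendsto (fun y ↦ y ^ n * gaussianWeight y) atTop (𝓝 0) := by
  have hexp : Tendsto (fun y : ℝ ↦ Real.exp (-(1 / 2) * y)) atTop (𝓝 0) :=
    Real.tendsto_exp_atBot.comp (tendsto_id.const_mul_atTop_of_neg (by norm_num))
  simpa only [Real.rpow_natCast, ← gaussianWeight_eq] using
    (rpow_mul_exp_neg_mul_sq_isLittleO_exp_neg (b := 1 / 4) (by norm_num) n).trans_tendsto hexp

lemma tendsto_gaussianWeight : Tendsto gaussianWeight atTop (𝓝 0) := by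
  simpa using tendsto_pow_mul_gaussianWeight 0

lemma hasDerivAt_gaussianTail (y : ℝ) : HasDerivAt gaussianTail (-gaussianWeight y) y :=
  hasDerivAt_integral_Ioi integrable_gaussianWeight
    (contDiff_gaussianWeight (n := 0)).continuous.continuousAt

lemma tendsto_gaussianTail : Tendsto gaussianTail atTop (𝓝 0) :=
  tendsto_integral_Ioi_zero tendsto_id

lemma gaussianTail_pos (y : ℝ) : 0 < gaussianTail y :=
  lt_of_hasDerivAt_neg_of_tendsto_atTop hasDerivAt_gaussianTail
    (fun x ↦ neg_neg_of_pos (gaussianWeight_pos x)) tendsto_gaussianTail y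

lemma contDiff_gaussianTail : ContDiff ℝ (⊤ : ℕ∞) gaussianTail := by
  refine contDiff_infty_iff_deriv.2 ⟨fun y ↦ (hasDerivAt_gaussianTail y).differentiableAt, ?_⟩
  rw [deriv_eq hasDerivAt_gaussianTail]
  exact contDiff_gaussianWeight.neg

lemma gaussianTail_zero : gaussianTail 0 = √π := by
  simp only [gaussianTail, gaussianWeight_eq, integral_gaussian_Ioi]
  rw [show π / (1 / 4) = 2 ^ 2 * π by ring, Real.sqrt_mul (by positivity),
    Real.sqrt_sq (by positivity), mul_div_cancel_left₀ _ two_ne_zero]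

lemma integral_Ioi_mul_gaussianWeight (y : ℝ) :
    ∫ ζ in Ioi y, ζ * gaussianWeight ζ = 2 * gaussianWeight y := by
  have hderiv (ζ : ℝ) : HasDerivAt (fun ζ ↦ -2 * gaussianWeight ζ) (ζ * gaussianWeight ζ) ζ := by
    convert! (hasDerivAt_gaussianWeight ζ).const_mul (-2) using 1
    ring
  rw [integral_Ioi_of_hasDerivAt_of_tendsto' (fun ζ _ ↦ hderiv ζ)
    integrable_mul_gaussianWeight.integrableOn (tendsto_gaussianWeight.const_mul (-2))]
  ring

lemma mul_gaussianTail_le (y : ℝ) : y * gaussianTail y ≤ 2 * gaussianWeight y := by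
  rw [gaussianTail, ← integral_const_mul, ← integral_Ioi_mul_gaussianWeight]
  refine setIntegral_mono_on (integrable_gaussianWeight.const_mul y).integrableOn
    integrable_mul_gaussianWeight.integrableOn measurableSet_Ioi fun ζ hζ ↦ ?_
  exact mul_le_mul_of_nonneg_right (mem_Ioi.1 hζ).le (gaussianWeight_pos ζ).le

end Gaussian

section W1ext

lemma W1ext_eq (y : ℝ) : W1ext y = gaussianWeight y - y / 2 * gaussianTail y := rfl

lemma hasDerivAt_W1ext (y : ℝ) : HasDerivAt W1ext (-gaussianTail y / 2) y := by
  convert! (hasDerivAt_gaussianWeight y).sub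
    (((hasDerivAt_id y).div_const 2).mul (hasDerivAt_gaussianTail y)) using 1
  simp only [id]
  ring

lemma W1ext_le_gaussianWeight {y : ℝ} (hy : 0 ≤ y) : W1ext y ≤ gaussianWeight y := by
  have hG := gaussianTail_pos y
  exact sub_le_self _ (by positivity)

lemma W1ext_nonneg (y : ℝ) : 0 ≤ W1ext y := by
  rw [W1ext_eq]
  linarith [mul_gaussianTail_le y]

lemma tendsto_W1ext : Tendsto W1ext atTop (𝓝 0) :=
  squeeze_zero' (.of_forall W1ext_nonneg)
    ((eventually_ge_atTop 0).mono fun _ ↦ W1ext_le_gaussianWeight) tendsto_gaussianWeight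

lemma tendsto_mul_W1ext : Tendsto (fun y ↦ y * W1ext y) atTop (𝓝 0) := by
  refine squeeze_zero' ?_ ?_ (by simpa only [pow_one] using tendsto_pow_mul_gaussianWeight 1)
  · filter_upwards [eventually_ge_atTop 0] with y hy using mul_nonneg hy (W1ext_nonneg y)
  · filter_upwards [eventually_ge_atTop 0] with y hy
    exact mul_le_mul_of_nonneg_left (W1ext_le_gaussianWeight hy) hy

lemma strictAnti_W1ext : StrictAnti W1ext :=
  strictAnti_of_hasDerivAt_neg hasDerivAt_W1ext fun x ↦ by linarith [gaussianTail_pos x]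

lemma W1ext_pos (y : ℝ) : 0 < W1ext y :=
  (W1ext_nonneg (y + 1)).trans_lt (strictAnti_W1ext (lt_add_one y))

lemma mul_W1ext_lt_gaussianTail (y : ℝ) : y * W1ext y < gaussianTail y := by
  have hderiv (x : ℝ) : HasDerivAt (fun x ↦ gaussianTail x - x * W1ext x) (-2 * W1ext x) x := by
    convert! (hasDerivAt_gaussianTail x).sub ((hasDerivAt_id x).mul (hasDerivAt_W1ext x)) using 1
    simp only [id, W1ext_eq]
    ring
  have hlim : Tendsto (fun x ↦ gaussianTail x - x * W1ext x) atTop (𝓝 0) := by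
    simpa using tendsto_gaussianTail.sub tendsto_mul_W1ext
  exact sub_pos.1 <| lt_of_hasDerivAt_neg_of_tendsto_atTop hderiv
    (fun x ↦ by linarith [W1ext_pos x]) hlim y

lemma gaussianWeight_mul_W1ext_lt (y : ℝ) :
    gaussianWeight y * W1ext y < gaussianTail y ^ 2 / 2 := by
  have hderiv (x : ℝ) : HasDerivAt (fun x ↦ gaussianTail x ^ 2 / 2 - gaussianWeight x * W1ext x)
      (gaussianWeight x / 2 * (x * W1ext x - gaussianTail x)) x := by
    convert! (((hasDerivAt_gaussianTail x).pow 2).div_const 2).sub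
      ((hasDerivAt_gaussianWeight x).mul (hasDerivAt_W1ext x)) using 1
    simp only [Nat.cast_ofNat]
    ring
  have hlim : Tendsto (fun x ↦ gaussianTail x ^ 2 / 2 - gaussianWeight x * W1ext x)
      atTop (𝓝 0) := by
    simpa using ((tendsto_gaussianTail.pow 2).div_const 2).sub
      (tendsto_gaussianWeight.mul tendsto_W1ext)
  exact sub_pos.1 <| lt_of_hasDerivAt_neg_of_tendsto_atTop hderiv
    (fun x ↦ mul_neg_of_pos_of_neg (half_pos (gaussianWeight_pos x))
      (sub_neg.2 (mul_W1ext_lt_gaussianTail x))) hlim y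

lemma contDiff_W1ext : ContDiff ℝ (⊤ : ℕ∞) W1ext :=
  contDiff_gaussianWeight.sub ((contDiff_id.div_const 2).mul contDiff_gaussianTail)

end W1ext

/-- The shooting ratio `W₁ / (-2 W₁')`: a bounded solution started from the endpoint `y` with
slope `α` exists exactly when this ratio is `h / α`. -/
noncomputable def shootingRatio (y : ℝ) : ℝ := W1ext y / (-2 * deriv W1ext y)

/-- The inverse of `shootingRatio`; only its values on the range `(0, ∞)` of the ratio are
meaningful. -/
noncomputable def shootingPoint : ℝ → ℝ := Function.invFun shootingRatio

section Shooting

lemma shootingRatio_eq_div (y : ℝ) : shootingRatio y = W1ext y / gaussianTail y := by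
  rw [shootingRatio, (hasDerivAt_W1ext y).deriv]
  ring_nf

lemma shootingRatio_pos (y : ℝ) : 0 < shootingRatio y := by
  rw [shootingRatio_eq_div]
  exact div_pos (W1ext_pos y) (gaussianTail_pos y)

lemma shootingRatio_zero : shootingRatio 0 = (√π)⁻¹ := by
  simp [shootingRatio_eq_div, W1ext_eq, gaussianTail_zero, gaussianWeight]

lemma hasDerivAt_shootingRatio (y : ℝ) : HasDerivAt shootingRatio
    ((gaussianWeight y * W1ext y - gaussianTail y ^ 2 / 2) / gaussianTail y ^ 2) y := by
  rw [funext shootingRatio_eq_div]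
  convert! (hasDerivAt_W1ext y).div (hasDerivAt_gaussianTail y) (gaussianTail_pos y).ne' using 1
  ring

lemma shootingRatio_deriv_neg (y : ℝ) :
    (gaussianWeight y * W1ext y - gaussianTail y ^ 2 / 2) / gaussianTail y ^ 2 < 0 :=
  div_neg_of_neg_of_pos (sub_neg.2 (gaussianWeight_mul_W1ext_lt y)) (pow_pos (gaussianTail_pos y) 2)

lemma strictAnti_shootingRatio : StrictAnti shootingRatio :=
  strictAnti_of_hasDerivAt_neg hasDerivAt_shootingRatio shootingRatio_deriv_neg

lemma contDiff_shootingRatio : ContDiff ℝ (⊤ : ℕ∞) shootingRatio := by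
  rw [funext shootingRatio_eq_div]
  exact contDiff_W1ext.div contDiff_gaussianTail fun y ↦ (gaussianTail_pos y).ne'

lemma shootingRatio_inv_le {t : ℝ} (ht : 0 < t) : shootingRatio t⁻¹ ≤ t := by
  rw [shootingRatio_eq_div, div_le_iff₀ (gaussianTail_pos _), ← inv_mul_le_iff₀ ht]
  exact (mul_W1ext_lt_gaussianTail _).le

lemma neg_half_le_shootingRatio (y : ℝ) : -y / 2 ≤ shootingRatio y := by
  rw [shootingRatio_eq_div, le_div_iff₀ (gaussianTail_pos y), W1ext_eq]
  linarith [gaussianWeight_pos y]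

lemma range_shootingRatio : range shootingRatio = Ioi 0 := by
  refine (range_subset_iff.2 shootingRatio_pos).antisymm fun t ht ↦ ?_
  refine mem_range_of_exists_le_of_exists_ge contDiff_shootingRatio.continuous
    ⟨t⁻¹, shootingRatio_inv_le ht⟩ ⟨-(2 * t), ?_⟩
  linarith [neg_half_le_shootingRatio (-(2 * t))]

lemma shootingRatio_shootingPoint {t : ℝ} (ht : 0 < t) : shootingRatio (shootingPoint t) = t :=
  Function.invFun_eq (range_shootingRatio.ge ht)

lemma shootingPoint_shootingRatio (s : ℝ) : shootingPoint (shootingRatio s) = s :=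
  Function.leftInverse_invFun strictAnti_shootingRatio.injective s

lemma eq_shootingPoint_of_shootingRatio_eq {s t : ℝ} (hst : shootingRatio s = t) :
    s = shootingPoint t := by
  rw [← hst, shootingPoint_shootingRatio]

lemma shootingPoint_lt_iff {s t : ℝ} (ht : 0 < t) : shootingPoint t < s ↔ shootingRatio s < t := by
  rw [← strictAnti_shootingRatio.lt_iff_gt, shootingRatio_shootingPoint ht]

lemma lt_shootingPoint_iff {s t : ℝ} (ht : 0 < t) : s < shootingPoint t ↔ t < shootingRatio s := by
  rw [← strictAnti_shootingRatio.lt_iff_gt, shootingRatio_shootingPoint ht]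

lemma strictAntiOn_shootingPoint : StrictAntiOn shootingPoint (Ioi 0) := fun s hs t ht hst ↦ by
  rwa [shootingPoint_lt_iff ht, shootingRatio_shootingPoint hs]

lemma contDiffOn_shootingPoint : ContDiffOn ℝ (⊤ : ℕ∞) shootingPoint (Ioi 0) := by
  rw [← range_shootingRatio]
  rintro - ⟨s, rfl⟩
  exact (contDiffAt_of_eventually_leftInverse (by simp) contDiff_shootingRatio.contDiffAt
    ((hasDerivAt_shootingRatio s).hasFDerivAt_equiv (shootingRatio_deriv_neg s).ne)
    (.of_forall shootingPoint_shootingRatio)).contDiffWithinAt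

end Shooting

section HermiteEquation

variable {s : Set ℝ} {w w' : ℝ → ℝ} {h : ℝ}

-- The left-hand side is the Wronskian of `w - 2h` with the homogeneous solution `y`.
lemma exists_sub_mul_eq_mul_gaussianWeight (hs : IsOpen s) (hs' : IsPreconnected s)
    (hw : ∀ y ∈ s, HasDerivAt w (w' y) y)
    (hw' : ∀ y ∈ s, HasDerivAt w' (1 / 2 * w y - y / 2 * w' y - h) y) :
    ∃ c, ∀ y ∈ s, w y - 2 * h - y * w' y = c * gaussianWeight y := by
  refine exists_eq_const_mul_of_hasDerivAt hs hs' (p := fun y ↦ -(y / 2)) (fun y hy ↦ ?_)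
    (fun y _ ↦ hasDerivAt_gaussianWeight y) (fun y _ ↦ (gaussianWeight_pos y).ne')
  convert! ((hw y hy).sub_const (2 * h)).sub ((hasDerivAt_id y).mul (hw' y hy)) using 1
  simp only [id]
  ring

lemma exists_eq_add_mul_add_mul_W1ext (hs : IsOpen s) (hs' : IsPreconnected s)
    (hw : ∀ y ∈ s, HasDerivAt w (w' y) y)
    (hw' : ∀ y ∈ s, HasDerivAt w' (1 / 2 * w y - y / 2 * w' y - h) y) :
    ∃ c d, ∀ y ∈ s, w y = 2 * h + d * y + c * W1ext y := by
  obtain ⟨c, hc⟩ := exists_sub_mul_eq_mul_gaussianWeight hs hs' hw hw'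
  have hderiv (y : ℝ) (hy : y ∈ s) : HasDerivAt (fun y ↦ w' y + c * (gaussianTail y / 2)) 0 y := by
    convert! (hw' y hy).add (((hasDerivAt_gaussianTail y).div_const 2).const_mul c) using 1
    linarith [hc y hy]
  obtain ⟨d, hd⟩ := hs.exists_is_const_of_deriv_eq_zero hs'
    (fun y hy ↦ (hderiv y hy).differentiableAt.differentiableWithinAt)
    (fun y hy ↦ (hderiv y hy).deriv)
  refine ⟨c, d, fun y hy ↦ ?_⟩
  rw [W1ext_eq]
  linear_combination hc y hy + y * hd y hy

end HermiteEquation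

namespace HermiteBVP

variable {α h σ : ℝ} {w : ℝ → ℝ}

lemma isBigO_one (hB : HermiteBVP α h σ w) : w =O[atTop] (fun _ ↦ (1 : ℝ)) := by
  obtain ⟨⟨M, hM⟩, -⟩ := hB
  refine .of_bound M ((eventually_ge_atTop σ).mono fun y hy ↦ ?_)
  simpa using hM y hy

lemma exists_eqOn_Ioi (hB : HermiteBVP α h σ w) :
    ∃ c, EqOn w (fun y ↦ 2 * h + c * W1ext y) (Ioi σ) := by
  have hode := hB.2.1
  have hw' (y : ℝ) (hy : y ∈ Ioi σ) :
      HasDerivAt (deriv w) (1 / 2 * w y - y / 2 * deriv w y - h) y := by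
    have hderiv₂ : deriv (deriv w) y = 1 / 2 * w y - y / 2 * deriv w y - h := by
      linarith [(hode y hy).2.2]
    exact hderiv₂ ▸ (hode y hy).2.1.hasDerivAt
  obtain ⟨c, d, hcd⟩ := exists_eq_add_mul_add_mul_W1ext isOpen_Ioi isPreconnected_Ioi
    (fun y hy ↦ (hode y hy).1.hasDerivAt) hw'
  have hlim : Tendsto (fun y ↦ 2 * h + c * W1ext y) atTop (𝓝 (2 * h + c * 0)) :=
    (tendsto_W1ext.const_mul c).const_add (2 * h)
  have hlinear : (fun y ↦ d * y) =O[atTop] (fun _ ↦ (1 : ℝ)) := by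
    refine (hB.isBigO_one.sub (hlim.isBigO_one ℝ)).congr' ?_ .rfl
    filter_upwards [eventually_gt_atTop σ] with y hy
    linarith [hcd y hy]
  refine ⟨c, fun y hy ↦ ?_⟩
  simpa [eq_zero_of_const_mul_isBigO_one hlinear] using hcd y hy

-- `derivWithin` is `0` where the one-sided derivative fails to exist, so `w'(σ) = α ≠ 0` carries
-- differentiability, hence continuity, at the endpoint.
lemma continuousOn_Ici (hB : HermiteBVP α h σ w) (hα : α ≠ 0) : ContinuousOn w (Ici σ) := by
  intro y hy
  obtain ⟨-, hode, -, hslope⟩ := hB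
  obtain rfl | hlt := (mem_Ici.1 hy).eq_or_lt
  · exact (differentiableWithinAt_of_derivWithin_ne_zero (hslope ▸ hα)).continuousWithinAt
  · exact (hode y hlt).1.continuousAt.continuousWithinAt

lemma exists_eqOn_Ici (hB : HermiteBVP α h σ w) (hα : α ≠ 0) :
    ∃ c, EqOn w (fun y ↦ 2 * h + c * W1ext y) (Ici σ) ∧
      2 * h + c * W1ext σ = 0 ∧ c * (-gaussianTail σ / 2) = α := by
  obtain ⟨c, hc⟩ := hB.exists_eqOn_Ioi
  have hderiv : HasDerivAt (fun y ↦ 2 * h + c * W1ext y) (c * (-gaussianTail σ / 2)) σ :=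
    ((hasDerivAt_W1ext σ).const_mul c).const_add (2 * h)
  have hcont : Continuous fun y ↦ 2 * h + c * W1ext y := by
    have hW := contDiff_W1ext.continuous
    fun_prop
  have hIci := hc.of_subset_closure (hB.continuousOn_Ici hα) hcont.continuousOn
    Ioi_subset_Ici_self (closure_Ioi σ).ge
  obtain ⟨-, -, hzero, hslope⟩ := hB
  refine ⟨c, hIci, (hIci self_mem_Ici).symm.trans hzero, ?_⟩
  rw [← hslope, derivWithin_congr hIci (hIci self_mem_Ici),
    hderiv.hasDerivWithinAt.derivWithin (uniqueDiffOn_Ici σ σ self_mem_Ici)]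

lemma shootingRatio_eq (hB : HermiteBVP α h σ w) (hα : α ≠ 0) : shootingRatio σ = h / α := by
  obtain ⟨c, -, hzero, hslope⟩ := hB.exists_eqOn_Ici hα
  rw [shootingRatio_eq_div, div_eq_div_iff (gaussianTail_pos σ).ne' hα, ← hslope]
  linear_combination -(gaussianTail σ / 2) * hzero

lemma eq_mul_one_sub_div (hB : HermiteBVP α h σ w) (hα : α ≠ 0) {y : ℝ} (hy : σ ≤ y) :
    w y = 2 * h * (1 - W1ext y / W1ext σ) := by
  obtain ⟨c, hc, hzero, -⟩ := hB.exists_eqOn_Ici hα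
  have hc_eq : c = -(2 * h) / W1ext σ := by
    rw [eq_div_iff (W1ext_pos σ).ne']
    linarith
  rw [hc hy, hc_eq]
  ring

lemma of_shootingRatio_eq (hα : α ≠ 0) (hσ : shootingRatio σ = h / α) :
    HermiteBVP α h σ (fun y ↦ 2 * h * (1 - W1ext y / W1ext σ)) := by
  have hW := W1ext_pos σ
  set w := fun y ↦ 2 * h * (1 - W1ext y / W1ext σ)
  have hw (y : ℝ) : HasDerivAt w (h / W1ext σ * gaussianTail y) y := by
    convert! (((hasDerivAt_W1ext y).div_const (W1ext σ)).const_sub 1).const_mul (2 * h) using 1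
    ring
  have hw' (y : ℝ) : HasDerivAt (deriv w) (h / W1ext σ * -gaussianWeight y) y := by
    rw [deriv_eq hw]
    exact (hasDerivAt_gaussianTail y).const_mul _
  refine ⟨⟨|2 * h|, fun y hy ↦ ?bounded⟩,
    fun y _ ↦ ⟨(hw y).differentiableAt, (hw' y).differentiableAt, ?ode⟩, ?zero, ?slope⟩
  case bounded =>
    have hle : W1ext y / W1ext σ ≤ 1 := (div_le_one hW).2 (strictAnti_W1ext.antitone hy)
    have hpos : 0 < W1ext y / W1ext σ := div_pos (W1ext_pos y) hW
    rw [abs_mul]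
    exact mul_le_of_le_one_right (abs_nonneg _) (abs_le.2 ⟨by linarith, by linarith⟩)
  case ode =>
    rw [(hw y).deriv, (hw' y).deriv]
    simp only [w, W1ext_eq y]
    ring
  case zero => simp [w, hW.ne']
  case slope =>
    rw [(hw σ).hasDerivWithinAt.derivWithin (uniqueDiffOn_Ici σ σ self_mem_Ici)]
    rw [shootingRatio_eq_div, div_eq_div_iff (gaussianTail_pos σ).ne' hα] at hσ
    rw [div_mul_eq_mul_div, div_eq_iff hW.ne']
    linarith

end HermiteBVP

/-- **Solvability of the Hermite boundary value problem.**
For `α, h > 0` there is a unique `σ = σ(h)` for which the boundary value problem admits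
a bounded solution; `σ(h)` is the unique solution of `W₁(σ)/(-2W₁'(σ)) = h/α`, the
bounded solution is `w(y) = 2h(1 - W₁(y)/W₁(σ))`, and `h ↦ σ(h)` is `C^∞`, strictly
decreasing, with `σ(α/√Real.pi) = 0`, `σ(h) > 0` for `0 < h < α/√Real.pi` and `σ(h) < 0` for
`h > α/√Real.pi`. -/
theorem hermite_bvp_unique_sigma (α : ℝ) (hα : 0 < α) :
    ∃ sigma : ℝ → ℝ,
      (∀ h : ℝ, 0 < h →
        -- σ(h) solves the shooting equation, uniquely
        W1ext (sigma h) / (-2 * deriv W1ext (sigma h)) = h / α ∧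
        (∀ σ' : ℝ, W1ext σ' / (-2 * deriv W1ext σ') = h / α → σ' = sigma h) ∧
        -- existence of the bounded solution, with the explicit formula
        HermiteBVP α h (sigma h) (fun y => 2 * h * (1 - W1ext y / W1ext (sigma h))) ∧
        -- uniqueness: any bounded solution has σ' = σ(h) and the same formula
        (∀ (σ' : ℝ) (w : ℝ → ℝ), HermiteBVP α h σ' w →
          σ' = sigma h ∧
            ∀ y : ℝ, sigma h ≤ y → w y = 2 * h * (1 - W1ext y / W1ext (sigma h)))) ∧
      ContDiffOn ℝ (⊤ : ℕ∞) sigma (Ioi 0) ∧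
      StrictAntiOn sigma (Ioi 0) ∧
      sigma (α / Real.sqrt Real.pi) = 0 ∧
      (∀ h : ℝ, 0 < h →
        (0 < sigma h ↔ h < α / Real.sqrt Real.pi) ∧ (sigma h < 0 ↔ α / Real.sqrt Real.pi < h)) := by
  have hpos {h : ℝ} (hh : 0 < h) : 0 < h / α := div_pos hh hα
  have hcrit : α / √π = shootingRatio 0 * α := by rw [shootingRatio_zero, div_eq_inv_mul]
  refine ⟨fun h ↦ shootingPoint (h / α), fun h hh ↦ ?_, ?smooth, ?anti, ?zero, fun h hh ↦ ?sign⟩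
  · have hσ := shootingRatio_shootingPoint (hpos hh)
    refine ⟨hσ, fun σ' ↦ eq_shootingPoint_of_shootingRatio_eq,
      .of_shootingRatio_eq hα.ne' hσ, fun σ' w hB ↦ ?_⟩
    obtain rfl := eq_shootingPoint_of_shootingRatio_eq (hB.shootingRatio_eq hα.ne')
    exact ⟨rfl, fun y ↦ hB.eq_mul_one_sub_div hα.ne'⟩
  case smooth =>
    exact contDiffOn_shootingPoint.comp (contDiff_id.div_const α).contDiffOn fun h ↦ hpos
  case anti =>
    exact fun a ha b hb hab ↦ strictAntiOn_shootingPoint (hpos ha) (hpos hb)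
      (div_lt_div_of_pos_right hab hα)
  case zero =>
    simp only [hcrit, mul_div_cancel_right₀ _ hα.ne', shootingPoint_shootingRatio]
  case sign =>
    rw [lt_shootingPoint_iff (hpos hh), shootingPoint_lt_iff (hpos hh), hcrit,
      div_lt_iff₀ hα, lt_div_iff₀ hα]
    exact ⟨.rfl, .rfl⟩
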